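/- Let A be a complex Banach algebra and let A♯ = A ⊕ ℂ be its unitization, with multiplication (a,r)(b,s) = (ab + sa + rb, rs) and norm ‖(a,r)‖ = ‖a‖ + |r|. Then A is 0-point amenable if and only if A♯ is 0-point amenable. -/

import Mathlib

/-- A continuous linear functional `φ` on `A` is *multiplicative* when `φ(ab) = φ(a)φ(b)`.
The nonzero such functionals are the characters of `A` (the set `Δ(A)`); together with `0`
they form `Δ₀(A)`. -/
def IsMulFunctional {A : Type*} [NonUnitalNormedRing A] [NormedSpace ℂ A]
    (φ : A →L[ℂ] ℂ) : Prop :=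
  ∀ a b : A, φ (a * b) = φ a * φ b

/-- `d ∈ A*` is a *continuous point derivation* of `A` at `φ` when
`d(ab) = d(a)φ(b) + φ(a)d(b)` for all `a, b ∈ A`. -/
def IsPointDerivationAt {A : Type*} [NonUnitalNormedRing A] [NormedSpace ℂ A]
    (φ d : A →L[ℂ] ℂ) : Prop :=
  ∀ a b : A, d (a * b) = d a * φ b + φ a * d b

/-- `A` is *0-point amenable* if the only continuous point derivation of `A` at any
`φ ∈ Δ₀(A)` (i.e. any multiplicative functional, zero allowed) is zero. -/
def ZeroPointAmenable (A : Type*) [NonUnitalNormedRing A] [NormedSpace ℂ A] : Prop :=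
  ∀ φ d : A →L[ℂ] ℂ, IsMulFunctional φ → IsPointDerivationAt φ d → d = 0

/-- `A` is *point amenable* if the only continuous point derivation of `A` at any character
`φ ∈ Δ(A)` (i.e. any nonzero multiplicative functional) is zero. -/
def PointAmenable (A : Type*) [NonUnitalNormedRing A] [NormedSpace ℂ A] : Prop :=
  ∀ φ d : A →L[ℂ] ℂ, IsMulFunctional φ → φ ≠ 0 → IsPointDerivationAt φ d → d = 0

/-! A point derivation at a multiplicative functional kills idempotents, in particular the unit of
`A♯`, so a point derivation of `A♯` is determined by its restriction to `A`. Conversely, if `d` is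
a point derivation of `A` at `φ`, then `(a, r) ↦ d a` is a point derivation of `A♯` at the character
`(a, r) ↦ r + φ a`. -/

section PointDerivation

variable {A B : Type*} [NonUnitalNormedRing A] [NormedSpace ℂ A]
  [NonUnitalNormedRing B] [NormedSpace ℂ B] {φ d : A →L[ℂ] ℂ}

theorem IsMulFunctional.comp (hφ : IsMulFunctional φ) {f : B →L[ℂ] A}
    (hf : ∀ a b, f (a * b) = f a * f b) : IsMulFunctional (φ.comp f) := fun a b => by
  simp only [ContinuousLinearMap.comp_apply, hf, hφ (f a) (f b)]

theorem IsPointDerivationAt.comp (hd : IsPointDerivationAt φ d) {f : B →L[ℂ] A}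
    (hf : ∀ a b, f (a * b) = f a * f b) : IsPointDerivationAt (φ.comp f) (d.comp f) :=
  fun a b => by simp only [ContinuousLinearMap.comp_apply, hf, hd (f a) (f b)]

theorem IsMulFunctional.apply_eq_zero_or_one_of_isIdempotentElem (hφ : IsMulFunctional φ) {e : A}
    (he : IsIdempotentElem e) : φ e = 0 ∨ φ e = 1 :=
  IsIdempotentElem.iff_eq_zero_or_one.1 <| (hφ e e).symm.trans (congrArg φ he.eq)

theorem IsPointDerivationAt.apply_eq_zero_of_isIdempotentElem (hd : IsPointDerivationAt φ d)
    (hφ : IsMulFunctional φ) {e : A} (he : IsIdempotentElem e) : d e = 0 := by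
  have hde : d e = d e * φ e + φ e * d e := (congrArg d he.eq).symm.trans (hd e e)
  rcases hφ.apply_eq_zero_or_one_of_isIdempotentElem he with h | h <;> rw [h] at hde
  · simpa only [mul_zero, zero_mul, add_zero] using hde
  · linear_combination -hde

end PointDerivation

/-- The unitization `A♯ = A ⊕ 𝕜` of a normed algebra `A`, with the norm `‖(a, r)‖ = ‖a‖ + ‖r‖`.
It is an abbreviation, so that Mathlib's ring and norm structures apply; in `Unitization` the scalar
is the first component. -/
abbrev L1Unitization (𝕜 A : Type*) : Type _ := WithLp 1 (Unitization 𝕜 A)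

namespace L1Unitization

section LinearMaps

variable (𝕜 A : Type*) [NormedField 𝕜] [NonUnitalNormedRing A] [NormedSpace 𝕜 A]

/-- The embedding `a ↦ (a, 0)` of `A` into `A♯`, as a continuous linear map. -/
def inr : A →L[𝕜] L1Unitization 𝕜 A where
  toLinearMap := (WithLp.linearEquiv 1 𝕜 (Unitization 𝕜 A)).symm ∘ₗ Unitization.inrHom 𝕜 𝕜 A
  cont := WithLp.unitization_isometry_inr.continuous

/-- The projection `(a, r) ↦ r` of `A♯` onto the scalars, as a continuous linear map. -/
def fst : L1Unitization 𝕜 A →L[𝕜] 𝕜 where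
  toFun x := x.ofLp.fst
  map_add' _ _ := rfl
  map_smul' _ _ := rfl
  cont := (WithLp.continuous_fst 1 𝕜 A).comp
    (WithLp.uniformEquiv_unitization_addEquiv_prod 𝕜 A).continuous

/-- The projection `(a, r) ↦ a` of `A♯` onto `A`, as a continuous linear map. -/
def snd : L1Unitization 𝕜 A →L[𝕜] A where
  toFun x := x.ofLp.snd
  map_add' _ _ := rfl
  map_smul' _ _ := rfl
  cont := (WithLp.continuous_snd 1 𝕜 A).comp
    (WithLp.uniformEquiv_unitization_addEquiv_prod 𝕜 A).continuous

theorem snd_comp_inr : (snd 𝕜 A).comp (inr 𝕜 A) = ContinuousLinearMap.id 𝕜 A :=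
  rfl

end LinearMaps

section Algebra

variable {𝕜 A : Type*} [NormedField 𝕜] [NonUnitalNormedRing A] [NormedSpace 𝕜 A]
  [IsScalarTower 𝕜 A A] [SMulCommClass 𝕜 A A]

theorem inr_mul (a b : A) : inr 𝕜 A (a * b) = inr 𝕜 A a * inr 𝕜 A b :=
  WithLp.ofLp_injective 1 (Unitization.inr_mul 𝕜 a b)

theorem fst_mul (x y : L1Unitization 𝕜 A) : fst 𝕜 A (x * y) = fst 𝕜 A x * fst 𝕜 A y :=
  Unitization.fst_mul x.ofLp y.ofLp

theorem snd_mul (x y : L1Unitization 𝕜 A) :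
    snd 𝕜 A (x * y) =
      fst 𝕜 A x • snd 𝕜 A y + fst 𝕜 A y • snd 𝕜 A x + snd 𝕜 A x * snd 𝕜 A y :=
  Unitization.snd_mul x.ofLp y.ofLp

theorem fst_smul_one_add_inr_snd (x : L1Unitization 𝕜 A) :
    fst 𝕜 A x • 1 + inr 𝕜 A (snd 𝕜 A x) = x := by
  rw [← Algebra.algebraMap_eq_smul_one]
  exact WithLp.ofLp_injective 1 (Unitization.inl_fst_add_inr_snd_eq x.ofLp)

theorem continuousLinearMap_ext {E : Type*} [AddCommMonoid E] [TopologicalSpace E] [Module 𝕜 E]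
    {f g : L1Unitization 𝕜 A →L[𝕜] E} (hone : f 1 = g 1)
    (hinr : f.comp (inr 𝕜 A) = g.comp (inr 𝕜 A)) : f = g := by
  ext x
  have hx : f (inr 𝕜 A (snd 𝕜 A x)) = g (inr 𝕜 A (snd 𝕜 A x)) := DFunLike.congr_fun hinr _
  rw [← fst_smul_one_add_inr_snd x, map_add, map_add, map_smul, map_smul, hone, hx]

end Algebra

end L1Unitization

section ZeroPointAmenable

variable {A : Type*} [NonUnitalNormedRing A] [NormedSpace ℂ A] [IsScalarTower ℂ A A]
  [SMulCommClass ℂ A A]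

open L1Unitization

theorem IsMulFunctional.fst_add_comp_snd {φ : A →L[ℂ] ℂ} (hφ : IsMulFunctional φ) :
    IsMulFunctional (fst ℂ A + φ.comp (snd ℂ A)) := fun x y => by
  simp only [add_apply, ContinuousLinearMap.comp_apply, fst_mul, snd_mul,
    map_add, map_smul, smul_eq_mul, hφ (snd ℂ A x) (snd ℂ A y)]
  ring

theorem IsPointDerivationAt.comp_snd {φ d : A →L[ℂ] ℂ} (hd : IsPointDerivationAt φ d) :
    IsPointDerivationAt (fst ℂ A + φ.comp (snd ℂ A)) (d.comp (snd ℂ A)) := fun x y => by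
  simp only [add_apply, ContinuousLinearMap.comp_apply, snd_mul,
    map_add, map_smul, smul_eq_mul, hd (snd ℂ A x) (snd ℂ A y)]
  ring

theorem ZeroPointAmenable.l1Unitization (h : ZeroPointAmenable A) :
    ZeroPointAmenable (L1Unitization ℂ A) := fun φ d hφ hd => by
  have hone : d 1 = 0 := hd.apply_eq_zero_of_isIdempotentElem hφ .one
  have hinr : d.comp (inr ℂ A) = 0 := h _ _ (hφ.comp inr_mul) (hd.comp inr_mul)
  exact continuousLinearMap_ext hone hinr

theorem ZeroPointAmenable.of_l1Unitization (h : ZeroPointAmenable (L1Unitization ℂ A)) :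
    ZeroPointAmenable A := fun φ d hφ hd => by
  have hsnd : d.comp (snd ℂ A) = 0 := h _ _ hφ.fst_add_comp_snd hd.comp_snd
  calc
    d = (d.comp (snd ℂ A)).comp (inr ℂ A) := by
      rw [ContinuousLinearMap.comp_assoc, snd_comp_inr, ContinuousLinearMap.comp_id]
    _ = 0 := by rw [hsnd, ContinuousLinearMap.zero_comp]

theorem zeroPointAmenable_unitization_iff_general :
    ZeroPointAmenable A ↔ ZeroPointAmenable (WithLp 1 (Unitization ℂ A)) :=
  ⟨.l1Unitization, .of_l1Unitization⟩

end ZeroPointAmenable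

/-- A complex Banach algebra `A` is 0-point amenable if and only if its unitization
`A♯ = A ⊕ ℂ` (with multiplication `(a,r)(b,s) = (ab + sa + rb, rs)` and norm
`‖(a,r)‖ = ‖a‖ + |r|`, realized as `WithLp 1 (Unitization ℂ A)`) is 0-point amenable. -/
theorem zeroPointAmenable_unitization_iff {A : Type*}
    [NonUnitalNormedRing A] [NormedSpace ℂ A] [IsScalarTower ℂ A A]
    [SMulCommClass ℂ A A] [CompleteSpace A] :
    ZeroPointAmenable A ↔ ZeroPointAmenable (WithLp 1 (Unitization ℂ A)) :=
  zeroPointAmenable_unitization_iff_general
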